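/- Fix m ≥ 1 and section data (l_j, vmin_j, vmax_j, τ_j) for j = 0,…,m−1 with l_j > 0, 0 < vmin_j < vmax_j, τ_j > 0, and vmin_j·τ_j ≤ l_j ≤ vmax_j·τ_j. Let a leader trajectory x_i be admissible with entry time t_e and a follower trajectory x_{i+1} be admissible with entry time t_e + Δt, where 0 ≤ Δt ≤ Σ_{j<m} τ_j. Let x̌_i be the leader's lower-bound trajectory, x̂_{i+1} the follower's upper-bound trajectory, and T̃ the critical-time set of the pair. Let safeD ≥ 0. If x̌_i(t) − x̂_{i+1}(t) ≥ safeD for all t ∈ T̃, then x_i(t) − x_{i+1}(t) ≥ safeD for all t ∈ [T_{i+1,0}, T_{i,m}]; that is, checking the bound separation at the finitely many critical times guarantees the required separation of the actual vehicles for all admissible trajectories. -/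

import Mathlib

/-!
An admissible trajectory is squeezed between its two envelopes: on each section the mean value
inequality, applied from either end of the section, bounds the position below by the maximum and
above by the minimum of two affine functions (`envelope`). Hence
`xi t - xf t ≥ xcheck t - xhat t`, and only the difference of the envelopes matters.

Each envelope is affine on each side of the switching point of every section, so every `t` lies in
an interval `[a₁, b₁]` where `xcheck` is affine and an interval `[a₂, b₂]` where `xhat` is affine,
with waypoints or switching points as endpoints (`exists_affine_piece`). On
`[max a₁ a₂, min b₁ b₂]` the difference `xcheck - xhat` is affine, so it is at least the smaller of
its values at the two ends. These ends are critical times: they lie in `[T_{i+1,0}, T_{i,m}]`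
because `a₂ ≥ T_{i+1,0}` and `b₁ ≤ T_{i,m}`.
-/

lemma exists_section (T : ℕ → ℝ) (t : ℝ) (m : ℕ) (hm : 1 ≤ m) (h0 : T 0 ≤ t) (h1 : t ≤ T m) :
    ∃ j < m, t ∈ Set.Icc (T j) (T (j + 1)) := by
  induction m, hm using Nat.le_induction with
  | base => exact ⟨0, Nat.one_pos, h0, h1⟩
  | succ n hn ih =>
    rcases le_total t (T n) with h | h
    · obtain ⟨j, hj, hjt⟩ := ih h
      exact ⟨j, by omega, hjt⟩
    · exact ⟨n, by omega, h, h1⟩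

lemma mean_value_bounds (f f' : ℝ → ℝ) (a b p q : ℝ) (hab : a ≤ b)
    (hd : ∀ t ∈ Set.Icc a b, HasDerivWithinAt f (f' t) (Set.Icc a b) t)
    (hs : ∀ t ∈ Set.Icc a b, p ≤ f' t ∧ f' t ≤ q) :
    p * (b - a) ≤ f b - f a ∧ f b - f a ≤ q * (b - a) := by
  rcases hab.eq_or_lt with rfl | hlt
  · simp
  · obtain ⟨c, hc, hce⟩ := exists_hasDerivAt_eq_slope f f' hlt
      (fun t ht => (hd t ht).continuousWithinAt)
      (fun t ht => (hd t ⟨ht.1.le, ht.2.le⟩).hasDerivAt (Icc_mem_nhds ht.1 ht.2))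
    have hb := hs c ⟨hc.1.le, hc.2.le⟩
    have hpos : 0 < b - a := sub_pos.2 hlt
    rw [eq_div_iff hpos.ne'] at hce
    rw [← hce]
    exact ⟨mul_le_mul_of_nonneg_right hb.1 hpos.le, mul_le_mul_of_nonneg_right hb.2 hpos.le⟩

/-- An admissible trajectory lies between its lower and upper envelopes on section `j`. -/
lemma envelope (m : ℕ) (vmin vmax L T : ℕ → ℝ)
    (hT : ∀ i j, i ≤ j → j ≤ m → T i ≤ T j)
    (x x' : ℝ → ℝ)
    (hd : ∀ t ∈ Set.Icc (T 0) (T m), HasDerivWithinAt x (x' t) (Set.Icc (T 0) (T m)) t)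
    (hw : ∀ j ≤ m, x (T j) = L j)
    (hs : ∀ j < m, ∀ t ∈ Set.Icc (T j) (T (j + 1)), vmin j ≤ x' t ∧ x' t ≤ vmax j)
    (j : ℕ) (hj : j < m) (t : ℝ) (ht : t ∈ Set.Icc (T j) (T (j + 1))) :
    max (L j + vmin j * (t - T j)) (L (j + 1) - vmax j * (T (j + 1) - t)) ≤ x t ∧
    x t ≤ min (L j + vmax j * (t - T j)) (L (j + 1) - vmin j * (T (j + 1) - t)) := by
  have h0 := hT 0 j (Nat.zero_le _) hj.le
  have h1 := hT (j + 1) m hj le_rfl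
  have key : ∀ a b, T j ≤ a → a ≤ b → b ≤ T (j + 1) →
      vmin j * (b - a) ≤ x b - x a ∧ x b - x a ≤ vmax j * (b - a) := by
    intro a b ha hab hb
    have hsub : Set.Icc a b ⊆ Set.Icc (T 0) (T m) :=
      Set.Icc_subset_Icc (h0.trans ha) (hb.trans h1)
    exact mean_value_bounds x x' a b _ _ hab (fun s h => (hd s (hsub h)).mono hsub)
      (fun s h => hs j hj s ⟨ha.trans h.1, h.2.trans hb⟩)
  have k1 := key (T j) t le_rfl ht.1 ht.2
  have k2 := key t (T (j + 1)) ht.1 ht.2 le_rfl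
  rw [hw j hj.le] at k1
  rw [hw (j + 1) hj] at k2
  refine ⟨max_le ?_ ?_, le_min ?_ ?_⟩ <;> linarith [k1.1, k1.2, k2.1, k2.2]

/-- If `f` is affine on each side of a switching point `B j` of every section, then any time lies
in an interval on which `f` is affine and whose ends are waypoints or switching points. -/
lemma exists_affine_piece (m : ℕ) (hm : 1 ≤ m) (T B : ℕ → ℝ) (f : ℝ → ℝ)
    (hT : ∀ i j, i ≤ j → j ≤ m → T i ≤ T j)
    (hB : ∀ j < m, B j ∈ Set.Icc (T j) (T (j + 1)))
    (hl : ∀ j < m, ∃ c d : ℝ, ∀ s ∈ Set.Icc (T j) (B j), f s = c + d * s)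
    (hr : ∀ j < m, ∃ c d : ℝ, ∀ s ∈ Set.Icc (B j) (T (j + 1)), f s = c + d * s)
    (t : ℝ) (ht : t ∈ Set.Icc (T 0) (T m)) :
    ∃ a b c d : ℝ, t ∈ Set.Icc a b ∧ T 0 ≤ a ∧ b ≤ T m ∧
      ((∃ j ≤ m, a = T j) ∨ ∃ j < m, a = B j) ∧ ((∃ j ≤ m, b = T j) ∨ ∃ j < m, b = B j) ∧
      ∀ s ∈ Set.Icc a b, f s = c + d * s := by
  obtain ⟨j, hj, hjt⟩ := exists_section T t m hm ht.1 ht.2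
  have h0 := hT 0 j (Nat.zero_le _) hj.le
  have h1 := hT (j + 1) m hj le_rfl
  rcases le_total t (B j) with h | h
  · obtain ⟨c, d, hf⟩ := hl j hj
    exact ⟨T j, B j, c, d, ⟨hjt.1, h⟩, h0, (hB j hj).2.trans h1, Or.inl ⟨j, hj.le, rfl⟩,
      Or.inr ⟨j, hj, rfl⟩, hf⟩
  · obtain ⟨c, d, hf⟩ := hr j hj
    exact ⟨B j, T (j + 1), c, d, ⟨h, hjt.2⟩, h0.trans (hB j hj).1, h1, Or.inr ⟨j, hj, rfl⟩,
      Or.inl ⟨j + 1, hj, rfl⟩, hf⟩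

lemma waypoint_mono (m : ℕ) (τ T : ℕ → ℝ) (e : ℝ) (hτ : ∀ j < m, 0 < τ j)
    (hT : ∀ j, T j = e + ∑ ℓ ∈ Finset.range j, τ ℓ) (i j : ℕ) (hij : i ≤ j) (hj : j ≤ m) :
    T i ≤ T j := by
  rw [hT, hT]
  have := Finset.sum_le_sum_of_subset_of_nonneg (f := τ) (Finset.range_mono hij)
    (fun k hk _ => (hτ k ((Finset.mem_range.1 hk).trans_le hj)).le)
  linarith


/-- Corollary 3 of the paper: If the separation between the
leader's lower-bound trajectory `x̌_i` and the follower's upper-bound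
trajectory `x̂_{i+1}` is at least `safeD` at every time of the critical-time
set `T̃`, then every pair of admissible leader/follower trajectories is
separated by at least `safeD` on all of `[T_{i+1,0}, T_{i,m}]`. -/
theorem critical_times_suffice_for_trajectory_separation
    (m : ℕ) (hm : 1 ≤ m) (l vmin vmax τ : ℕ → ℝ)
    (hl : ∀ j < m, 0 < l j)
    (hvmin : ∀ j < m, 0 < vmin j) (hvv : ∀ j < m, vmin j < vmax j)
    (hτ : ∀ j < m, 0 < τ j)
    (hlo : ∀ j < m, vmin j * τ j ≤ l j) (hhi : ∀ j < m, l j ≤ vmax j * τ j)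
    (te Δt : ℝ) (hΔt0 : 0 ≤ Δt) (hΔt1 : Δt ≤ ∑ j ∈ Finset.range m, τ j)
    (L Ti Tf : ℕ → ℝ)
    (hL : ∀ j, L j = ∑ ℓ ∈ Finset.range j, l ℓ)
    (hTi : ∀ j, Ti j = te + ∑ ℓ ∈ Finset.range j, τ ℓ)
    (hTf : ∀ j, Tf j = (te + Δt) + ∑ ℓ ∈ Finset.range j, τ ℓ)
    -- leader trajectory, admissible with entry time te
    (xi xi' : ℝ → ℝ)
    (hderivi : ∀ t ∈ Set.Icc (Ti 0) (Ti m),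
      HasDerivWithinAt xi (xi' t) (Set.Icc (Ti 0) (Ti m)) t)
    (hwpi : ∀ j ≤ m, xi (Ti j) = L j)
    (hspeedi : ∀ j < m, ∀ t ∈ Set.Icc (Ti j) (Ti (j + 1)),
      vmin j ≤ xi' t ∧ xi' t ≤ vmax j)
    -- follower trajectory, admissible with entry time te + Δt
    (xf xf' : ℝ → ℝ)
    (hderivf : ∀ t ∈ Set.Icc (Tf 0) (Tf m),
      HasDerivWithinAt xf (xf' t) (Set.Icc (Tf 0) (Tf m)) t)
    (hwpf : ∀ j ≤ m, xf (Tf j) = L j)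
    (hspeedf : ∀ j < m, ∀ t ∈ Set.Icc (Tf j) (Tf (j + 1)),
      vmin j ≤ xf' t ∧ xf' t ≤ vmax j)
    -- leader's lower-bound trajectory and follower's upper-bound trajectory
    (xcheck xhat : ℝ → ℝ)
    (hxcheck : ∀ j < m, ∀ t ∈ Set.Icc (Ti j) (Ti (j + 1)),
      xcheck t = max (L j + vmin j * (t - Ti j)) (L (j + 1) - vmax j * (Ti (j + 1) - t)))
    (hxhat : ∀ j < m, ∀ t ∈ Set.Icc (Tf j) (Tf (j + 1)),
      xhat t = min (L j + vmax j * (t - Tf j)) (L (j + 1) - vmin j * (Tf (j + 1) - t)))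
    -- critical-time set
    (Ttil : Set ℝ)
    (hTtil : Ttil =
      {t : ℝ |
        (∃ j ≤ m, t = Ti j) ∨
        (∃ j < m, t = Ti j + (vmax j * τ j - l j) / (vmax j - vmin j)) ∨
        (∃ j ≤ m, t = Tf j) ∨
        (∃ j < m, t = Tf j + (l j - vmin j * τ j) / (vmax j - vmin j))}
      ∩ Set.Icc (Tf 0) (Ti m))
    (safeD : ℝ) (hsafeD : 0 ≤ safeD)
    (hsep : ∀ t ∈ Ttil, safeD ≤ xcheck t - xhat t) :
    ∀ t ∈ Set.Icc (Tf 0) (Ti m), safeD ≤ xi t - xf t := by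
  have hTi_succ : ∀ j, Ti (j + 1) = Ti j + τ j := by
    intro j; rw [hTi, hTi, Finset.sum_range_succ]; ring
  have hTf_succ : ∀ j, Tf (j + 1) = Tf j + τ j := by
    intro j; rw [hTf, hTf, Finset.sum_range_succ]; ring
  have hL_succ : ∀ j, L (j + 1) = L j + l j := by
    intro j; rw [hL, hL, Finset.sum_range_succ]
  have hmi := waypoint_mono m τ Ti te hτ hTi
  have hmf := waypoint_mono m τ Tf (te + Δt) hτ hTf
  have hstart : Ti 0 ≤ Tf 0 := by rw [hTi, hTf]; linarith
  have hend : Ti m ≤ Tf m := by rw [hTi, hTf]; linarith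
  intro t ht
  have hti : t ∈ Set.Icc (Ti 0) (Ti m) := ⟨hstart.trans ht.1, ht.2⟩
  have htf : t ∈ Set.Icc (Tf 0) (Tf m) := ⟨ht.1, ht.2.trans hend⟩
  have hlow : xcheck t ≤ xi t := by
    obtain ⟨j, hj, hjt⟩ := exists_section Ti t m hm hti.1 hti.2
    rw [hxcheck j hj t hjt]
    exact (envelope m vmin vmax L Ti hmi xi xi' hderivi hwpi hspeedi j hj t hjt).1
  have hupp : xf t ≤ xhat t := by
    obtain ⟨j, hj, hjt⟩ := exists_section Tf t m hm htf.1 htf.2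
    rw [hxhat j hj t hjt]
    exact (envelope m vmin vmax L Tf hmf xf xf' hderivf hwpf hspeedf j hj t hjt).2
  -- The switching offsets `u`, `w` are where the two affine branches of each envelope cross.
  have hu : ∀ j < m, ∃ u, u = (vmax j * τ j - l j) / (vmax j - vmin j) ∧ 0 ≤ u ∧ u ≤ τ j ∧
      u * (vmax j - vmin j) = vmax j * τ j - l j := by
    intro j hj
    have hpos : 0 < vmax j - vmin j := sub_pos.2 (hvv j hj)
    refine ⟨_, rfl, div_nonneg (by linarith [hhi j hj]) hpos.le, ?_,
      div_mul_cancel₀ _ hpos.ne'⟩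
    rw [div_le_iff₀ hpos]
    linarith [hlo j hj]
  have hw : ∀ j < m, ∃ w, w = (l j - vmin j * τ j) / (vmax j - vmin j) ∧ 0 ≤ w ∧ w ≤ τ j ∧
      w * (vmax j - vmin j) = l j - vmin j * τ j := by
    intro j hj
    have hpos : 0 < vmax j - vmin j := sub_pos.2 (hvv j hj)
    refine ⟨_, rfl, div_nonneg (by linarith [hlo j hj]) hpos.le, ?_,
      div_mul_cancel₀ _ hpos.ne'⟩
    rw [div_le_iff₀ hpos]
    linarith [hhi j hj]
  obtain ⟨a₁, b₁, c₁, d₁, ht₁, ha₁, hb₁, hPa₁, hPb₁, hf₁⟩ := exists_affine_piece m hm Ti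
    (fun j => Ti j + (vmax j * τ j - l j) / (vmax j - vmin j)) xcheck hmi
    (by
      intro j hj
      obtain ⟨u, hu, h0, h1, -⟩ := hu j hj
      simp only [← hu, hTi_succ]
      constructor <;> linarith)
    (by
      intro j hj
      obtain ⟨u, hu, h0, h1, h2⟩ := hu j hj
      refine ⟨L j - vmin j * Ti j, vmin j, fun s hs => ?_⟩
      simp only [← hu] at hs
      rw [hxcheck j hj s ⟨hs.1, by linarith [hs.2, hTi_succ j]⟩, max_eq_left]
      · ring
      · rw [hTi_succ, hL_succ]
        nlinarith [hs.2, hvv j hj])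
    (by
      intro j hj
      obtain ⟨u, hu, h0, h1, h2⟩ := hu j hj
      refine ⟨L (j + 1) - vmax j * Ti (j + 1), vmax j, fun s hs => ?_⟩
      simp only [← hu] at hs
      rw [hxcheck j hj s ⟨by linarith [hs.1], hs.2⟩, max_eq_right]
      · ring
      · rw [hTi_succ, hL_succ]
        nlinarith [hs.1, hvv j hj]) t hti
  obtain ⟨a₂, b₂, c₂, d₂, ht₂, ha₂, hb₂, hPa₂, hPb₂, hf₂⟩ := exists_affine_piece m hm Tf
    (fun j => Tf j + (l j - vmin j * τ j) / (vmax j - vmin j)) xhat hmf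
    (by
      intro j hj
      obtain ⟨w, hw, h0, h1, -⟩ := hw j hj
      simp only [← hw, hTf_succ]
      constructor <;> linarith)
    (by
      intro j hj
      obtain ⟨w, hw, h0, h1, h2⟩ := hw j hj
      refine ⟨L j - vmax j * Tf j, vmax j, fun s hs => ?_⟩
      simp only [← hw] at hs
      rw [hxhat j hj s ⟨hs.1, by linarith [hs.2, hTf_succ j]⟩, min_eq_left]
      · ring
      · rw [hTf_succ, hL_succ]
        nlinarith [hs.2, hvv j hj])
    (by
      intro j hj
      obtain ⟨w, hw, h0, h1, h2⟩ := hw j hj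
      refine ⟨L (j + 1) - vmin j * Tf (j + 1), vmin j, fun s hs => ?_⟩
      simp only [← hw] at hs
      rw [hxhat j hj s ⟨by linarith [hs.1], hs.2⟩, min_eq_right]
      · ring
      · rw [hTf_succ, hL_succ]
        nlinarith [hs.1, hvv j hj]) t htf
  have hmat : max a₁ a₂ ≤ t := max_le ht₁.1 ht₂.1
  have htmb : t ≤ min b₁ b₂ := le_min ht₁.2 ht₂.2
  have hA : max a₁ a₂ ∈ Ttil := by
    rw [hTtil]
    refine ⟨?_, ha₂.trans (le_max_right _ _), hmat.trans ht.2⟩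
    rcases max_choice a₁ a₂ with h | h <;> rw [h]
    · exact hPa₁.imp_right Or.inl
    · exact Or.inr (Or.inr hPa₂)
  have hB : min b₁ b₂ ∈ Ttil := by
    rw [hTtil]
    refine ⟨?_, ht.1.trans htmb, (min_le_left _ _).trans hb₁⟩
    rcases min_choice b₁ b₂ with h | h <;> rw [h]
    · exact hPb₁.imp_right Or.inl
    · exact Or.inr (Or.inr hPb₂)
  have hdiff : ∀ s ∈ Set.Icc (max a₁ a₂) (min b₁ b₂),
      xcheck s - xhat s = (c₁ - c₂) + (d₁ - d₂) * s := by
    intro s hs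
    rw [hf₁ s ⟨(le_max_left _ _).trans hs.1, hs.2.trans (min_le_left _ _)⟩,
      hf₂ s ⟨(le_max_right _ _).trans hs.1, hs.2.trans (min_le_right _ _)⟩]
    ring
  have hsA := hsep _ hA
  have hsB := hsep _ hB
  rw [hdiff _ ⟨le_rfl, hmat.trans htmb⟩] at hsA
  rw [hdiff _ ⟨hmat.trans htmb, le_rfl⟩] at hsB
  have hst : safeD ≤ xcheck t - xhat t := by
    rw [hdiff t ⟨hmat, htmb⟩]
    rcases le_total 0 (d₁ - d₂) with h | h
    · linarith [mul_le_mul_of_nonneg_left hmat h]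
    · linarith [mul_le_mul_of_nonpos_left htmb h]
  linarith
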